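/- arXiv:2001.11113 — 2 statements merged into one kernel-verified Lean document; each statement's English description precedes it below -/
import Mathlib

section
/- Let P be an n×n irreducible row-stochastic matrix with stationary distribution d ∈ ℝ^n having strictly positive entries, let d_μ ∈ ℝ^n be a probability vector with strictly positive entries, D := diag(d_μ), λ > 0, and define for τ ∈ ℝ^n: L(τ) := (1/2) Σ_i ((PᵀDτ − Dτ)_i)² / (d_μ)_i + (λ/2)(d_μᵀτ − 1)². Then L(τ*) = 0 for τ* := D^{-1}d, and L(τ) > 0 for every τ ≠ τ*; i.e., τ minimizes L over ℝ^n if and only if τ = τ*. -/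
/-! Substituting `v = Dτ`, the loss is a sum of two nonnegative terms that vanish together exactly
when `Pᵀv = v` and `∑ v = 1`. By a Perron–Frobenius argument the solutions of `Pᵀv = v` form the
line through `d`: if `c` is the least of the ratios `vᵢ / dᵢ`, then `v - c d` is a nonnegative
solution with a zero entry, which irreducibility spreads to all entries. The normalization `∑ v = 1`
then leaves only `v = d`. -/

open Matrix

section PerronFrobenius

variable {ι : Type*} [Fintype ι]

theorem pow_mulVec_eq_pow_smul {R : Type*} [CommSemiring R] [DecidableEq ι] {A : Matrix ι ι R}
    {r : R} {v : ι → R} (hv : A *ᵥ v = r • v) (k : ℕ) : A ^ k *ᵥ v = r ^ k • v := by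
  induction k with
  | zero => simp
  | succ k ih => rw [pow_succ, ← mulVec_mulVec, hv, mulVec_smul, ih, smul_smul, pow_succ']

variable {𝕜 : Type*} [Field 𝕜] [LinearOrder 𝕜] [IsStrictOrderedRing 𝕜]
  {A : Matrix ι ι 𝕜} {r : 𝕜} {d v : ι → 𝕜}

theorem pos_of_isIrreducible_of_mulVec_eq_smul (hA : A.IsIrreducible) (hv : A *ᵥ v = r • v)
    (hv_nonneg : 0 ≤ v) (hv_ne : v ≠ 0) (i : ι) : 0 < v i := by
  classical
  refine (hv_nonneg i).lt_of_ne' fun hi => hv_ne <| funext fun j => ?_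
  obtain ⟨k, -, hk⟩ := (isIrreducible_iff_exists_pow_pos hA.nonneg).1 hA i j
  have hsum : ∑ l, (A ^ k) i l * v l = 0 := by
    simpa [hi, mulVec, dotProduct] using congrFun (pow_mulVec_eq_pow_smul hv k) i
  have hterm : (A ^ k) i j * v j = 0 :=
    (Finset.sum_eq_zero_iff_of_nonneg fun l _ =>
      mul_nonneg (pow_apply_nonneg hA.nonneg k i l) (hv_nonneg l)).1 hsum j (Finset.mem_univ j)
  exact (mul_eq_zero.1 hterm).resolve_left hk.ne'

theorem exists_eq_smul_of_isIrreducible_of_mulVec_eq_smul (hA : A.IsIrreducible)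
    (hd : A *ᵥ d = r • d) (hd_nonneg : 0 ≤ d) (hd_ne : d ≠ 0) (hv : A *ᵥ v = r • v) :
    ∃ c : 𝕜, v = c • d := by
  obtain ⟨j, -⟩ := Function.ne_iff.1 hd_ne
  have : Nonempty ι := ⟨j⟩
  have hd_pos := pos_of_isIrreducible_of_mulVec_eq_smul hA hd hd_nonneg hd_ne
  obtain ⟨i, hmin⟩ := Finite.exists_min fun i => v i / d i
  set c := v i / d i with hc
  have hw : A *ᵥ (v - c • d) = r • (v - c • d) := by
    rw [mulVec_sub, mulVec_smul, hv, hd, smul_sub, smul_comm]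
  have hw_nonneg : 0 ≤ v - c • d := fun j =>
    sub_nonneg.2 <| (le_div_iff₀ (hd_pos j)).1 (hmin j)
  have hwi : (v - c • d) i = 0 := by simp [hc, (hd_pos i).ne']
  refine ⟨c, sub_eq_zero.1 ?_⟩
  by_contra hw_ne
  exact (pos_of_isIrreducible_of_mulVec_eq_smul hA hw hw_nonneg hw_ne i).ne' hwi

theorem eq_of_isIrreducible_of_mulVec_eq_smul_of_sum_eq (hA : A.IsIrreducible)
    (hd : A *ᵥ d = r • d) (hd_nonneg : 0 ≤ d) (hv : A *ᵥ v = r • v)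
    (hd_sum : ∑ i, d i ≠ 0) (hsum : ∑ i, v i = ∑ i, d i) : v = d := by
  have hd_ne : d ≠ 0 := by
    rintro rfl
    simp at hd_sum
  obtain ⟨c, rfl⟩ := exists_eq_smul_of_isIrreducible_of_mulVec_eq_smul hA hd hd_nonneg hd_ne hv
  have hc : c * ∑ i, d i = ∑ i, d i := by simpa [Finset.mul_sum] using hsum
  rw [(mul_eq_right₀ hd_sum).1 hc, one_smul]

end PerronFrobenius

section WeightedSumOfSquares

variable {ι 𝕜 : Type*} [Fintype ι] [Field 𝕜] [LinearOrder 𝕜] [IsStrictOrderedRing 𝕜] {μ : ι → 𝕜}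

theorem sum_sq_div_nonneg (hμ : 0 ≤ μ) (v : ι → 𝕜) : 0 ≤ ∑ i, v i ^ 2 / μ i :=
  Finset.sum_nonneg fun i _ => div_nonneg (sq_nonneg _) (hμ i)

theorem sum_sq_div_eq_zero_iff (hμ : ∀ i, 0 < μ i) {v : ι → 𝕜} :
    ∑ i, v i ^ 2 / μ i = 0 ↔ v = 0 := by
  rw [Finset.sum_eq_zero_iff_of_nonneg fun i _ => div_nonneg (sq_nonneg _) (hμ i).le]
  simp [funext_iff, (hμ _).ne']

end WeightedSumOfSquares

theorem forall_le_iff_eq_of_eq_zero_iff {α β : Type*} [PartialOrder β] [Zero β] {f : α → β} {a : α}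
    (hf : ∀ x, 0 ≤ f x) (h : ∀ x, f x = 0 ↔ x = a) (x : α) : (∀ y, f x ≤ f y) ↔ x = a := by
  rw [← h]
  exact ⟨fun hx => ((hx a).trans_eq ((h a).2 rfl)).antisymm (hf x), fun hx y => hx ▸ hf y⟩

section GradientDICE

variable {ι 𝕜 : Type*} [Fintype ι] [DecidableEq ι] [Field 𝕜]

/-- The average-reward (`γ = 1`) GradientDICE objective
`(1/2)‖PᵀDτ - Dτ‖²_{D⁻¹} + (lam/2)(μᵀτ - 1)²` with `D = diagonal μ`. The weight `D⁻¹` is encoded as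
entrywise division by `μ`, so entries with `μ i = 0` contribute nothing to the norm. -/
def gradientDICELoss (P : Matrix ι ι 𝕜) (μ : ι → 𝕜) (lam : 𝕜) (τ : ι → 𝕜) : 𝕜 :=
  (1 / 2) * ∑ i, ((Pᵀ *ᵥ (diagonal μ *ᵥ τ) - diagonal μ *ᵥ τ) i) ^ 2 / μ i
    + (lam / 2) * ((∑ i, μ i * τ i) - 1) ^ 2

variable [LinearOrder 𝕜] [IsStrictOrderedRing 𝕜]
  {P : Matrix ι ι 𝕜} {μ d : ι → 𝕜} {lam : 𝕜}

theorem gradientDICELoss_nonneg (hμ : 0 ≤ μ) (hlam : 0 ≤ lam) (τ : ι → 𝕜) :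
    0 ≤ gradientDICELoss P μ lam τ := by
  have hres := sum_sq_div_nonneg hμ (Pᵀ *ᵥ (diagonal μ *ᵥ τ) - diagonal μ *ᵥ τ)
  unfold gradientDICELoss
  positivity

theorem gradientDICELoss_eq_zero_iff (hμ : ∀ i, 0 < μ i) (hlam : 0 < lam) {τ : ι → 𝕜} :
    gradientDICELoss P μ lam τ = 0 ↔ Pᵀ *ᵥ (μ * τ) = μ * τ ∧ ∑ i, (μ * τ) i = 1 := by
  have hdiag : diagonal μ *ᵥ τ = μ * τ := funext (mulVec_diagonal μ τ)
  have hres := sum_sq_div_nonneg (fun i => (hμ i).le) (Pᵀ *ᵥ (μ * τ) - μ * τ)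
  rw [gradientDICELoss, hdiag, add_eq_zero_iff_of_nonneg (by positivity) (by positivity),
    mul_eq_zero_iff_left (by norm_num), mul_eq_zero_iff_left (half_pos hlam).ne',
    sum_sq_div_eq_zero_iff hμ, sub_eq_zero, sq_eq_zero_iff, sub_eq_zero]
  rfl

theorem gradientDICELoss_eq_zero_iff_eq_div (hP : P.IsIrreducible) (hd_nonneg : 0 ≤ d)
    (hd_sum : ∑ i, d i = 1) (hd_stat : Pᵀ *ᵥ d = d) (hμ : ∀ i, 0 < μ i) (hlam : 0 < lam)
    {τ : ι → 𝕜} : gradientDICELoss P μ lam τ = 0 ↔ τ = d / μ := by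
  have hτ : τ = d / μ ↔ μ * τ = d := by
    simp only [funext_iff, Pi.div_apply, Pi.mul_apply, eq_div_iff (hμ _).ne', mul_comm]
  rw [gradientDICELoss_eq_zero_iff hμ hlam, hτ]
  constructor
  · rintro ⟨hfix, hsum⟩
    exact eq_of_isIrreducible_of_mulVec_eq_smul_of_sum_eq (r := 1) hP.transpose
      (by rwa [one_smul]) hd_nonneg (by rwa [one_smul]) (by simp [hd_sum]) (hsum.trans hd_sum.symm)
  · rintro rfl
    exact ⟨hd_stat, hd_sum⟩

theorem stmt6_general (hP : P.IsIrreducible) (hd_nonneg : 0 ≤ d) (hd_sum : ∑ i, d i = 1)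
    (hd_stat : Pᵀ *ᵥ d = d) (hμ : ∀ i, 0 < μ i) (hlam : 0 < lam) :
    gradientDICELoss P μ lam (d / μ) = 0 ∧
      (∀ τ, τ ≠ d / μ → 0 < gradientDICELoss P μ lam τ) ∧
      ∀ τ, (∀ τ', gradientDICELoss P μ lam τ ≤ gradientDICELoss P μ lam τ') ↔ τ = d / μ := by
  have hnonneg (τ : ι → 𝕜) : 0 ≤ gradientDICELoss P μ lam τ :=
    gradientDICELoss_nonneg (fun i => (hμ i).le) hlam.le τ
  have hzero (τ : ι → 𝕜) : gradientDICELoss P μ lam τ = 0 ↔ τ = d / μ :=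
    gradientDICELoss_eq_zero_iff_eq_div hP hd_nonneg hd_sum hd_stat hμ hlam
  exact ⟨(hzero _).2 rfl, fun τ hτ => (hnonneg τ).lt_of_ne' (mt (hzero τ).1 hτ),
    forall_le_iff_eq_of_eq_zero_iff hnonneg hzero⟩

end GradientDICE

/-- γ = 1 case of the GradientDICE consistency theorem.
For irreducible row-stochastic `P` with strictly positive stationary
distribution `d`, the objective
`L(τ) = (1/2)‖PᵀDτ - Dτ‖²_{D⁻¹} + (λ/2)(d_μᵀτ - 1)²` vanishes at `τ* = D⁻¹ d`
and is strictly positive elsewhere; hence `τ` minimizes `L` iff `τ = τ*`. -/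
theorem stmt6 {n : ℕ} (hn : 1 ≤ n) (P : Matrix (Fin n) (Fin n) ℝ)
    (hP_nonneg : ∀ i j, 0 ≤ P i j) (hP_row : ∀ i, ∑ j, P i j = 1)
    (hP_irred : ∀ i j, ∃ k : ℕ, 1 ≤ k ∧ 0 < (P ^ k) i j)
    (d : Fin n → ℝ) (hd_pos : ∀ i, 0 < d i) (hd_sum : ∑ i, d i = 1)
    (hd_stat : P.transpose.mulVec d = d)
    (dμ : Fin n → ℝ) (hdμ_pos : ∀ i, 0 < dμ i) (hdμ_sum : ∑ i, dμ i = 1)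
    (lam : ℝ) (hlam : 0 < lam)
    (L : (Fin n → ℝ) → ℝ)
    (hL : ∀ τ, L τ =
      (1/2) * ∑ i, ((P.transpose.mulVec ((Matrix.diagonal dμ).mulVec τ)
          - (Matrix.diagonal dμ).mulVec τ) i) ^ 2 / dμ i
      + (lam/2) * ((∑ i, dμ i * τ i) - 1) ^ 2)
    (τstar : Fin n → ℝ) (hτstar : τstar = fun i => d i / dμ i) :
    L τstar = 0 ∧ (∀ τ, τ ≠ τstar → 0 < L τ) ∧
      (∀ τ, (∀ τ', L τ ≤ L τ') ↔ τ = τstar) := by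
  obtain rfl : L = gradientDICELoss P dμ lam := funext hL
  exact hτstar ▸ stmt6_general ((isIrreducible_iff_exists_pow_pos hP_nonneg).2 hP_irred)
    (fun i => (hd_pos i).le) hd_sum hd_stat hdμ_pos hlam
end

section
/- Let P be an n×n row-stochastic matrix, μ0 ∈ ℝ^n a probability vector, γ ∈ [0,1), d_μ ∈ ℝ^n a probability vector with strictly positive entries, D := diag(d_μ), and λ > 0. Set A := (I − γPᵀ)D, d_γ := (1−γ)(I − γPᵀ)^{-1}μ0, τ* := D^{-1}d_γ, and b_* := (1−γ)AᵀD^{-1}μ0 + λ d_μ. Then (AᵀD^{-1}A + λ d_μ d_μᵀ) τ* = b_*; consequently, in the tabular setting (X = I) with no ridge regularization (ξ = 0), the GradientDICE fixed point equals the true density ratio: w_{∞,0} = τ*. -/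
open Matrix

/-! The density ratio `τ* = D⁻¹ d_γ` makes both residuals of the GradientDICE objective vanish: it
solves `A τ* = (1 - γ) μ₀`, because `A D⁻¹ = 1 - γ Pᵀ` and `d_γ` satisfies the Bellman flow
equation, and it meets the normalization `d_μᵀ τ* = 1ᵀ d_γ = 1`, because
`1ᵀ (1 - γ Pᵀ) = (1 - γ) 1ᵀ`. The KKT equation is `Aᵀ D⁻¹` applied to the first identity plus
`λ d_μ` times the second. -/

variable {ι K : Type*} [Fintype ι]

section Division

variable [Semifield K] {d : ι → K}

lemma diagonal_mulVec_div_cancel [DecidableEq ι] (hd : ∀ i, d i ≠ 0) (x : ι → K) :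
    diagonal d *ᵥ (x / d) = x := by
  ext i
  rw [mulVec_diagonal, Pi.div_apply, mul_div_cancel₀ _ (hd i)]

lemma dotProduct_div_cancel (hd : ∀ i, d i ≠ 0) (x : ι → K) : d ⬝ᵥ (x / d) = ∑ i, x i :=
  Finset.sum_congr rfl fun i _ => mul_div_cancel₀ (x i) (hd i)

end Division

variable [DecidableEq ι]

lemma isUnit_one_sub_smul_of_sum_norm_le_one [NormedField K] {M : Matrix ι ι K}
    (hM : ∀ i, ∑ j, ‖M i j‖ ≤ 1) {γ : K} (hγ : ‖γ‖ < 1) : IsUnit (1 - γ • M) := by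
  rw [isUnit_iff_isUnit_det, isUnit_iff_ne_zero]
  refine det_ne_zero_of_sum_row_lt_diag fun i => ?_
  have off_diag : ∑ j ∈ Finset.univ.erase i, ‖M i j‖ ≤ 1 - ‖M i i‖ := by
    linarith [hM i, Finset.add_sum_erase Finset.univ (‖M i ·‖) (Finset.mem_univ i)]
  calc ∑ j ∈ Finset.univ.erase i, ‖(1 - γ • M) i j‖
      = ‖γ‖ * ∑ j ∈ Finset.univ.erase i, ‖M i j‖ := by
        rw [Finset.mul_sum]
        refine Finset.sum_congr rfl fun j hj => ?_
        simp [one_apply_ne (Finset.ne_of_mem_erase hj).symm]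
    _ ≤ ‖γ‖ * (1 - ‖M i i‖) := by gcongr
    _ < 1 - ‖γ * M i i‖ := by rw [norm_mul]; linarith
    _ ≤ ‖(1 - γ • M) i i‖ := by simpa using norm_sub_norm_le 1 (γ * M i i)

lemma isUnit_one_sub_smul_transpose_of_nonneg_of_sum_row_eq_one {P : Matrix ι ι ℝ}
    (hP_nonneg : ∀ i j, 0 ≤ P i j) (hP_row : ∀ i, ∑ j, P i j = 1) {γ : ℝ} (hγ : |γ| < 1) :
    IsUnit (1 - γ • Pᵀ) := by
  have hP_norm : ∀ i, ∑ j, ‖P i j‖ ≤ 1 := fun i => by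
    simp only [Real.norm_of_nonneg (hP_nonneg i _), hP_row i, le_refl]
  have h_transpose : 1 - γ • Pᵀ = (1 - γ • P)ᵀ := by
    rw [transpose_sub, transpose_one, transpose_smul]
  rw [h_transpose, isUnit_transpose]
  exact isUnit_one_sub_smul_of_sum_norm_le_one hP_norm hγ

section Occupancy

variable [CommRing K] {P : Matrix ι ι K} {γ : K}

lemma mulVec_inv_mulVec_of_isUnit {M : Matrix ι ι K} (hM : IsUnit M) (v : ι → K) :
    M *ᵥ (M⁻¹ *ᵥ v) = v := by
  rw [mulVec_mulVec, mul_nonsing_inv M ((isUnit_iff_isUnit_det M).1 hM), one_mulVec]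

lemma one_vecMul_one_sub_smul_transpose (hP : ∀ i, ∑ j, P i j = 1) :
    1 ᵥ* (1 - γ • Pᵀ) = (1 - γ) • (1 : ι → K) := by
  have hP_one : P *ᵥ 1 = 1 := funext fun i => (dotProduct_one (P i)).trans (hP i)
  rw [vecMul_sub, vecMul_one, vecMul_smul, vecMul_transpose, hP_one, sub_smul, one_smul]

/-- The normalized discounted state occupancy `d_γ = (1 - γ) (1 - γ Pᵀ)⁻¹ μ₀` of the Markov chain
with transition matrix `P` started from `μ₀`. The matrix inverse is `0` when `1 - γ Pᵀ` is
singular. -/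
noncomputable def discountedOccupancy (P : Matrix ι ι K) (γ : K) (μ₀ : ι → K) : ι → K :=
  (1 - γ) • (1 - γ • Pᵀ)⁻¹ *ᵥ μ₀

lemma one_sub_smul_transpose_mulVec_discountedOccupancy (h : IsUnit (1 - γ • Pᵀ)) (μ₀ : ι → K) :
    (1 - γ • Pᵀ) *ᵥ discountedOccupancy P γ μ₀ = (1 - γ) • μ₀ := by
  rw [discountedOccupancy, mulVec_smul, mulVec_inv_mulVec_of_isUnit h]

lemma sum_discountedOccupancy (hP : ∀ i, ∑ j, P i j = 1) (h : IsUnit (1 - γ • Pᵀ)) (μ₀ : ι → K) :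
    ∑ i, discountedOccupancy P γ μ₀ i = ∑ i, μ₀ i :=
  calc ∑ i, discountedOccupancy P γ μ₀ i
      = ((1 - γ) • 1) ⬝ᵥ ((1 - γ • Pᵀ)⁻¹ *ᵥ μ₀) := by
        rw [← one_dotProduct, discountedOccupancy, dotProduct_smul, smul_dotProduct]
    _ = 1 ⬝ᵥ ((1 - γ • Pᵀ) *ᵥ ((1 - γ • Pᵀ)⁻¹ *ᵥ μ₀)) := by
        rw [← one_vecMul_one_sub_smul_transpose hP, dotProduct_mulVec 1]
    _ = ∑ i, μ₀ i := by rw [mulVec_inv_mulVec_of_isUnit h, one_dotProduct]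

end Occupancy

theorem stmt13_general [Field K] {P : Matrix ι ι K} (hP_row : ∀ i, ∑ j, P i j = 1)
    {γ : K} (hγP : IsUnit (1 - γ • Pᵀ)) {μ₀ : ι → K} (hμ₀_sum : ∑ i, μ₀ i = 1)
    {d : ι → K} (hd : ∀ i, d i ≠ 0) (c : K)
    {A : Matrix ι ι K} (hA : A = (1 - γ • Pᵀ) * diagonal d)
    {τ : ι → K} (hτ : τ = discountedOccupancy P γ μ₀ / d) :
    (Aᵀ * (diagonal d)⁻¹ * A + c • vecMulVec d d) *ᵥ τ
      = (1 - γ) • (Aᵀ * (diagonal d)⁻¹) *ᵥ μ₀ + c • d := by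
  have bellman_flow : A *ᵥ τ = (1 - γ) • μ₀ := by
    rw [hA, hτ, ← mulVec_mulVec, diagonal_mulVec_div_cancel hd,
      one_sub_smul_transpose_mulVec_discountedOccupancy hγP]
  have normalization : d ⬝ᵥ τ = 1 := by
    rw [hτ, dotProduct_div_cancel hd, sum_discountedOccupancy hP_row hγP, hμ₀_sum]
  rw [add_mulVec, ← mulVec_mulVec, bellman_flow, mulVec_smul, smul_mulVec, vecMulVec_mulVec,
    normalization, MulOpposite.op_one, one_smul]

/-- In the tabular setting (`X = I`) with no ridge
regularization (`ξ = 0`), with `A := (I - γPᵀ)D`,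
`d_γ := (1-γ)(I - γPᵀ)⁻¹μ0`, `τ* := D⁻¹d_γ`, and
`b_* := (1-γ)AᵀD⁻¹μ0 + λ d_μ`, the true density ratio `τ*` solves the
GradientDICE KKT system: `(AᵀD⁻¹A + λ d_μ d_μᵀ) τ* = b_*`, i.e. the
GradientDICE fixed point `w_{∞,0}` equals `τ*`. -/
theorem stmt13 {n : ℕ} (hn : 1 ≤ n) (P : Matrix (Fin n) (Fin n) ℝ)
    (hP_nonneg : ∀ i j, 0 ≤ P i j) (hP_row : ∀ i, ∑ j, P i j = 1)
    (γ : ℝ) (hγ0 : 0 ≤ γ) (hγ1 : γ < 1)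
    (μ0 : Fin n → ℝ) (hμ0_nonneg : ∀ i, 0 ≤ μ0 i) (hμ0_sum : ∑ i, μ0 i = 1)
    (dμ : Fin n → ℝ) (hdμ_pos : ∀ i, 0 < dμ i) (hdμ_sum : ∑ i, dμ i = 1)
    (lam : ℝ) (hlam : 0 < lam)
    (A : Matrix (Fin n) (Fin n) ℝ)
    (hA : A = ((1 : Matrix (Fin n) (Fin n) ℝ) - γ • P.transpose)
        * Matrix.diagonal dμ)
    (τstar : Fin n → ℝ)
    (hτstar : τstar = fun i =>
      ((1 - γ) • (((1 : Matrix (Fin n) (Fin n) ℝ) - γ • P.transpose)⁻¹.mulVec μ0)) i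
        / dμ i) :
    (A.transpose * (Matrix.diagonal dμ)⁻¹ * A
        + lam • (Matrix.of fun i j => dμ i * dμ j)).mulVec τstar
      = (1 - γ) • (A.transpose * (Matrix.diagonal dμ)⁻¹).mulVec μ0 + lam • dμ :=
  stmt13_general hP_row
    (isUnit_one_sub_smul_transpose_of_nonneg_of_sum_row_eq_one hP_nonneg hP_row
      (abs_lt.2 ⟨by linarith, hγ1⟩))
    hμ0_sum (fun i => (hdμ_pos i).ne') lam hA hτstar
end
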